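/- Let u be a bounded upper semicontinuous function on Ω_T which is a viscosity subsolution of F(Hw) = e^{∂_t w + G(t,z,w)} g(z) in Ω_T, and let A > osc_{Ω_T} u. Then for every sufficiently large k, the sup-convolution u^k is a viscosity subsolution of F(Hw) = e^{∂_t w + G_k(t,z,w)} g(z) in (A/k, T−A/k) × Ω, where G_k(t,z,r) = inf_{|s| ≤ A/k} G(t+s, z, r). -/

import Mathlib

open Filter Topology Set

noncomputable section

/-- The `l`-th elementary symmetric polynomial of `x ∈ ℝⁿ`. -/
def esym (n l : ℕ) (x : Fin n → ℝ) : ℝ :=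
  ∑ s ∈ Finset.powersetCard l (Finset.univ : Finset (Fin n)), ∏ i ∈ s, x i

/-- The cone `Γ_k = {x ∈ ℝⁿ : σ_l(x) > 0 for all 1 ≤ l ≤ k}`. -/
def GammaK (n k : ℕ) : Set (Fin n → ℝ) :=
  {x | ∀ l, 1 ≤ l → l ≤ k → 0 < esym n l x}

/-- `Γ ⊊ ℝⁿ` is an open, convex, symmetric cone with vertex `0` and `Γₙ ⊆ Γ ⊆ Γ₁`. -/
def IsGammaCone (n : ℕ) (Γ : Set (Fin n → ℝ)) : Prop :=
  IsOpen Γ ∧ Convex ℝ Γ ∧ (∀ x ∈ Γ, ∀ t : ℝ, 0 < t → t • x ∈ Γ) ∧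
    (∀ σ : Equiv.Perm (Fin n), ∀ x ∈ Γ, x ∘ σ ∈ Γ) ∧
    Γ ≠ Set.univ ∧ GammaK n n ⊆ Γ ∧ Γ ⊆ GammaK n 1

/-- `f : cl(Γ) → [0,∞)` symmetric, concave, strictly increasing in each variable,
vanishing on `∂Γ`. -/
def IsHessianDensity (n : ℕ) (Γ : Set (Fin n → ℝ)) (f : (Fin n → ℝ) → ℝ) : Prop :=
  (∀ x ∈ closure Γ, 0 ≤ f x) ∧
    (∀ σ : Equiv.Perm (Fin n), ∀ x ∈ closure Γ, f (x ∘ σ) = f x) ∧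
    ConcaveOn ℝ (closure Γ) f ∧
    (∀ x ∈ closure Γ, ∀ y ∈ closure Γ, (∀ i, x i ≤ y i) → x ≠ y → f x < f y) ∧
    (∀ x ∈ frontier Γ, f x = 0)

/-- The complex Hessian `(∂²u/∂z_j∂z̄_k)_{j,k}` of a real-valued function on `ℂⁿ`,
computed from the real second derivative. -/
def complexHessian {n : ℕ} (u : (Fin n → ℂ) → ℝ) (z : Fin n → ℂ) :
    Matrix (Fin n) (Fin n) ℂ := fun j k =>
  (((iteratedFDeriv ℝ 2 u z ![Pi.single j 1, Pi.single k 1] +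
        iteratedFDeriv ℝ 2 u z ![Pi.single j Complex.I, Pi.single k Complex.I]) / 4 : ℝ) : ℂ) +
    Complex.I *
      (((iteratedFDeriv ℝ 2 u z ![Pi.single j 1, Pi.single k Complex.I] -
          iteratedFDeriv ℝ 2 u z ![Pi.single j Complex.I, Pi.single k 1]) / 4 : ℝ) : ℂ)

open Classical in
/-- `F(H) = f(λ(H))` if `λ(H) ∈ cl(Γ)` and `F(H) = −∞` otherwise. -/
def Fop {n : ℕ} (f : (Fin n → ℝ) → ℝ) (Γ : Set (Fin n → ℝ))
    (A : Matrix (Fin n) (Fin n) ℂ) : EReal :=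
  if h : A.IsHermitian then
    if h.eigenvalues ∈ closure Γ then ((f h.eigenvalues : ℝ) : EReal) else ⊥
  else ⊥

/-- An upper test function (C¹ in t, C² in z near `p₀`) for `u` at `p₀`. -/
def IsUpperTestAt {n : ℕ} (u q : ℝ × (Fin n → ℂ) → ℝ) (p₀ : ℝ × (Fin n → ℂ)) : Prop :=
  q p₀ = u p₀ ∧ (∀ᶠ p in 𝓝 p₀, u p ≤ q p) ∧
    ∀ᶠ p in 𝓝 p₀, DifferentiableAt ℝ (fun t => q (t, p.2)) p.1 ∧
      ContDiffAt ℝ 2 (fun z => q (p.1, z)) p.2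

/-- A lower test function (C¹ in t, C² in z near `p₀`) for `v` at `p₀`. -/
def IsLowerTestAt {n : ℕ} (v q : ℝ × (Fin n → ℂ) → ℝ) (p₀ : ℝ × (Fin n → ℂ)) : Prop :=
  q p₀ = v p₀ ∧ (∀ᶠ p in 𝓝 p₀, q p ≤ v p) ∧
    ∀ᶠ p in 𝓝 p₀, DifferentiableAt ℝ (fun t => q (t, p.2)) p.1 ∧
      ContDiffAt ℝ 2 (fun z => q (p.1, z)) p.2

/-- Viscosity subsolution of `F(Hw) = e^{∂ₜw + G(t,z,w)} g(z)` on `D`. -/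
def ParSubsolOn {n : ℕ} (f : (Fin n → ℝ) → ℝ) (Γ : Set (Fin n → ℝ))
    (G : ℝ → (Fin n → ℂ) → ℝ → ℝ) (g : (Fin n → ℂ) → ℝ)
    (D : Set (ℝ × (Fin n → ℂ))) (u : ℝ × (Fin n → ℂ) → ℝ) : Prop :=
  UpperSemicontinuousOn u D ∧
    ∀ p₀ ∈ D, ∀ q, IsUpperTestAt u q p₀ →
      ((Real.exp (deriv (fun t => q (t, p₀.2)) p₀.1 + G p₀.1 p₀.2 (q p₀)) * g p₀.2 : ℝ) : EReal)
        ≤ Fop f Γ (complexHessian (fun z => q (p₀.1, z)) p₀.2)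

/-- Viscosity supersolution of `F(Hw) = e^{∂ₜw + G(t,z,w)} g(z)` on `D`. -/
def ParSupersolOn {n : ℕ} (f : (Fin n → ℝ) → ℝ) (Γ : Set (Fin n → ℝ))
    (G : ℝ → (Fin n → ℂ) → ℝ → ℝ) (g : (Fin n → ℂ) → ℝ)
    (D : Set (ℝ × (Fin n → ℂ))) (v : ℝ × (Fin n → ℂ) → ℝ) : Prop :=
  LowerSemicontinuousOn v D ∧
    ∀ p₀ ∈ D, ∀ q, IsLowerTestAt v q p₀ →
      Fop f Γ (complexHessian (fun z => q (p₀.1, z)) p₀.2)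
        ≤ ((Real.exp (deriv (fun t => q (t, p₀.2)) p₀.1 + G p₀.1 p₀.2 (q p₀)) * g p₀.2 : ℝ) : EReal)

/-- Upper semicontinuous envelope relative to `D`. -/
def uscEnvOn {X : Type*} [TopologicalSpace X] (D : Set X) (w : X → ℝ) (x : X) : ℝ :=
  Filter.limsup w (𝓝[D] x)

/-- Lower semicontinuous envelope relative to `D`. -/
def lscEnvOn {X : Type*} [TopologicalSpace X] (D : Set X) (w : X → ℝ) (x : X) : ℝ :=
  Filter.liminf w (𝓝[D] x)

/-- Sup-convolution in time `u^k`. -/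
def supConv {n : ℕ} (u : ℝ × (Fin n → ℂ) → ℝ) (A k : ℝ) (p : ℝ × (Fin n → ℂ)) : ℝ :=
  sSup ((fun s : ℝ => u (p.1 + s, p.2) - k * |s|) '' Set.Icc (-(A / k)) (A / k))

/-- Inf-convolution in time `u_k`. -/
def infConv {n : ℕ} (u : ℝ × (Fin n → ℂ) → ℝ) (A k : ℝ) (p : ℝ × (Fin n → ℂ)) : ℝ :=
  sInf ((fun s : ℝ => u (p.1 + s, p.2) + k * |s|) '' Set.Icc (-(A / k)) (A / k))

/-- Parabolic superjet `𝒫^{2,+} u (p₀)`; `p` and `Q` are the ℝ-linear first- and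
second-order data on `ℂⁿ ≅ ℝ^{2n}`. -/
def InParSuperjet {n : ℕ} (u : ℝ × (Fin n → ℂ) → ℝ) (p₀ : ℝ × (Fin n → ℂ)) (τ : ℝ)
    (p : (Fin n → ℂ) →ₗ[ℝ] ℝ) (Q : (Fin n → ℂ) →ₗ[ℝ] (Fin n → ℂ) →ₗ[ℝ] ℝ) : Prop :=
  ∀ ε > 0, ∀ᶠ x in 𝓝 p₀,
    u x ≤ u p₀ + τ * (x.1 - p₀.1) + p (x.2 - p₀.2) +
      (1 / 2) * Q (x.2 - p₀.2) (x.2 - p₀.2) + ε * (|x.1 - p₀.1| + ‖x.2 - p₀.2‖ ^ 2)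

/-- Parabolic subjet `𝒫^{2,−} v (p₀) = −𝒫^{2,+}(−v)(p₀)`. -/
def InParSubjet {n : ℕ} (v : ℝ × (Fin n → ℂ) → ℝ) (p₀ : ℝ × (Fin n → ℂ)) (τ : ℝ)
    (p : (Fin n → ℂ) →ₗ[ℝ] ℝ) (Q : (Fin n → ℂ) →ₗ[ℝ] (Fin n → ℂ) →ₗ[ℝ] ℝ) : Prop :=
  InParSuperjet (fun x => -(v x)) p₀ (-τ) (-p) (-Q)

/-- An upper test function (C² near `z₀`) for `ψ` at `z₀` (elliptic case). -/
def IsUpperTestAtE {n : ℕ} (ψ q : (Fin n → ℂ) → ℝ) (z₀ : Fin n → ℂ) : Prop :=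
  q z₀ = ψ z₀ ∧ (∀ᶠ z in 𝓝 z₀, ψ z ≤ q z) ∧ ContDiffAt ℝ 2 q z₀

/-- A lower test function (C² near `z₀`) for `ψ` at `z₀` (elliptic case). -/
def IsLowerTestAtE {n : ℕ} (ψ q : (Fin n → ℂ) → ℝ) (z₀ : Fin n → ℂ) : Prop :=
  q z₀ = ψ z₀ ∧ (∀ᶠ z in 𝓝 z₀, q z ≤ ψ z) ∧ ContDiffAt ℝ 2 q z₀

/-- `ψ` is `Γ`-subharmonic on `D` in the viscosity sense: `F(Hψ) ≥ 0`. -/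
def GammaSubharmonicOn {n : ℕ} (Γ : Set (Fin n → ℝ)) (D : Set (Fin n → ℂ))
    (ψ : (Fin n → ℂ) → ℝ) : Prop :=
  ∀ z₀ ∈ D, ∀ q, IsUpperTestAtE ψ q z₀ →
    ∃ hh : (complexHessian q z₀).IsHermitian, hh.eigenvalues ∈ closure Γ

/-- Viscosity subsolution of the elliptic equation `e^{K(z,ψ)} − F(Hψ) = 0` on `D`,
where the right-hand side `K z₀ (q z₀)` may depend on the tested value. -/
def EllSubsolOn {n : ℕ} (f : (Fin n → ℝ) → ℝ) (Γ : Set (Fin n → ℝ))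
    (K : (Fin n → ℂ) → ℝ → ℝ) (D : Set (Fin n → ℂ)) (ψ : (Fin n → ℂ) → ℝ) : Prop :=
  UpperSemicontinuousOn ψ D ∧
    ∀ z₀ ∈ D, ∀ q, IsUpperTestAtE ψ q z₀ →
      ((K z₀ (q z₀) : ℝ) : EReal) ≤ Fop f Γ (complexHessian q z₀)

/-- Viscosity subsolution of the time-derivative-free parabolic equation
`e^{H(t,z,w)} h(t,z) − F(Hw) = 0` on `D`. -/
def ParSubsolNoDtOn {n : ℕ} (f : (Fin n → ℝ) → ℝ) (Γ : Set (Fin n → ℝ))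
    (Hf : ℝ → (Fin n → ℂ) → ℝ → ℝ) (h : ℝ × (Fin n → ℂ) → ℝ)
    (D : Set (ℝ × (Fin n → ℂ))) (w : ℝ × (Fin n → ℂ) → ℝ) : Prop :=
  UpperSemicontinuousOn w D ∧
    ∀ p₀ ∈ D, ∀ q, IsUpperTestAt w q p₀ →
      ((Real.exp (Hf p₀.1 p₀.2 (q p₀)) * h p₀ : ℝ) : EReal)
        ≤ Fop f Γ (complexHessian (fun z => q (p₀.1, z)) p₀.2)

/-- Subsolution of the Cauchy–Dirichlet problem. -/
def CDSubsol {n : ℕ} (f : (Fin n → ℝ) → ℝ) (Γ : Set (Fin n → ℝ))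
    (G : ℝ → (Fin n → ℂ) → ℝ → ℝ) (g : (Fin n → ℂ) → ℝ)
    (Ω : Set (Fin n → ℂ)) (T : ℝ) (φ : ℝ → (Fin n → ℂ) → ℝ)
    (u₀ : (Fin n → ℂ) → ℝ) (u : ℝ × (Fin n → ℂ) → ℝ) : Prop :=
  UpperSemicontinuousOn u (Set.Ico 0 T ×ˢ closure Ω) ∧
    ParSubsolOn f Γ G g (Set.Ioo 0 T ×ˢ Ω) u ∧
    (∀ t ∈ Set.Ico (0 : ℝ) T, ∀ z ∈ frontier Ω, u (t, z) ≤ φ t z) ∧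
    (∀ z ∈ closure Ω, u (0, z) ≤ u₀ z)

/-- Supersolution of the Cauchy–Dirichlet problem. -/
def CDSupersol {n : ℕ} (f : (Fin n → ℝ) → ℝ) (Γ : Set (Fin n → ℝ))
    (G : ℝ → (Fin n → ℂ) → ℝ → ℝ) (g : (Fin n → ℂ) → ℝ)
    (Ω : Set (Fin n → ℂ)) (T : ℝ) (φ : ℝ → (Fin n → ℂ) → ℝ)
    (u₀ : (Fin n → ℂ) → ℝ) (v : ℝ × (Fin n → ℂ) → ℝ) : Prop :=
  LowerSemicontinuousOn v (Set.Ico 0 T ×ˢ closure Ω) ∧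
    ParSupersolOn f Γ G g (Set.Ioo 0 T ×ˢ Ω) v ∧
    (∀ t ∈ Set.Ico (0 : ℝ) T, ∀ z ∈ frontier Ω, φ t z ≤ v (t, z)) ∧
    (∀ z ∈ closure Ω, u₀ z ≤ v (0, z))

/-- `ε`-subbarrier for the Cauchy–Dirichlet problem. -/
def SubBarrier {n : ℕ} (f : (Fin n → ℝ) → ℝ) (Γ : Set (Fin n → ℝ))
    (G : ℝ → (Fin n → ℂ) → ℝ → ℝ) (g : (Fin n → ℂ) → ℝ)
    (Ω : Set (Fin n → ℂ)) (T : ℝ) (φ : ℝ → (Fin n → ℂ) → ℝ)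
    (u₀ : (Fin n → ℂ) → ℝ) (ε : ℝ) (u : ℝ × (Fin n → ℂ) → ℝ) : Prop :=
  UpperSemicontinuousOn u (Set.Ico 0 T ×ˢ closure Ω) ∧
    ParSubsolOn f Γ G g (Set.Ioo 0 T ×ˢ Ω) u ∧
    (∀ z ∈ closure Ω,
      u₀ z - ε ≤ lscEnvOn (Set.Ico 0 T ×ˢ closure Ω) u (0, z) ∧
        lscEnvOn (Set.Ico 0 T ×ˢ closure Ω) u (0, z) ≤ u (0, z) ∧ u (0, z) ≤ u₀ z) ∧
    (∀ t ∈ Set.Ico (0 : ℝ) T, ∀ z ∈ frontier Ω,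
      φ t z - ε ≤ lscEnvOn (Set.Ico 0 T ×ˢ closure Ω) u (t, z) ∧
        lscEnvOn (Set.Ico 0 T ×ˢ closure Ω) u (t, z) ≤ u (t, z) ∧ u (t, z) ≤ φ t z)

/-- `ε`-superbarrier for the Cauchy–Dirichlet problem. -/
def SuperBarrier {n : ℕ} (f : (Fin n → ℝ) → ℝ) (Γ : Set (Fin n → ℝ))
    (G : ℝ → (Fin n → ℂ) → ℝ → ℝ) (g : (Fin n → ℂ) → ℝ)
    (Ω : Set (Fin n → ℂ)) (T : ℝ) (φ : ℝ → (Fin n → ℂ) → ℝ)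
    (u₀ : (Fin n → ℂ) → ℝ) (ε : ℝ) (v : ℝ × (Fin n → ℂ) → ℝ) : Prop :=
  LowerSemicontinuousOn v (Set.Ico 0 T ×ˢ closure Ω) ∧
    ParSupersolOn f Γ G g (Set.Ioo 0 T ×ˢ Ω) v ∧
    (∀ z ∈ closure Ω,
      uscEnvOn (Set.Ico 0 T ×ˢ closure Ω) v (0, z) ≤ u₀ z + ε ∧
        v (0, z) ≤ uscEnvOn (Set.Ico 0 T ×ˢ closure Ω) v (0, z) ∧ u₀ z ≤ v (0, z)) ∧
    (∀ t ∈ Set.Ico (0 : ℝ) T, ∀ z ∈ frontier Ω,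
      uscEnvOn (Set.Ico 0 T ×ˢ closure Ω) v (t, z) ≤ φ t z + ε ∧
        v (t, z) ≤ uscEnvOn (Set.Ico 0 T ×ˢ closure Ω) v (t, z) ∧ φ t z ≤ v (t, z))

/-- Lipschitz in the time variable, uniformly on `[0,T) × cl(Ω)`. -/
def LipschitzInT {n : ℕ} (Ω : Set (Fin n → ℂ)) (T : ℝ) (u : ℝ × (Fin n → ℂ) → ℝ) : Prop :=
  ∃ L : ℝ, ∀ t₁ ∈ Set.Ico (0 : ℝ) T, ∀ t₂ ∈ Set.Ico (0 : ℝ) T, ∀ z ∈ closure Ω,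
    |u (t₁, z) - u (t₂, z)| ≤ L * |t₁ - t₂|

/-- The pair `(u₀, g)` is admissible. -/
def Admissible {n : ℕ} (f : (Fin n → ℝ) → ℝ) (Γ : Set (Fin n → ℝ))
    (Ω : Set (Fin n → ℂ)) (g u₀ : (Fin n → ℂ) → ℝ) : Prop :=
  ∀ ε > 0, ∃ uε : (Fin n → ℂ) → ℝ, ∃ Cε > 0,
    ContinuousOn uε (closure Ω) ∧ (∀ z ∈ closure Ω, u₀ z ≤ uε z ∧ uε z ≤ u₀ z + ε) ∧
      ∀ z₀ ∈ Ω, ∀ q, IsLowerTestAtE uε q z₀ →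
        Fop f Γ (complexHessian q z₀) ≤ ((Real.exp Cε * g z₀ : ℝ) : EReal)

/-- `Ω` is a strictly `Γ`-pseudoconvex domain. -/
def StrictlyGammaPseudoconvex {n : ℕ} (Γ : Set (Fin n → ℝ)) (Ω : Set (Fin n → ℂ)) : Prop :=
  ∃ ρ : (Fin n → ℂ) → ℝ, ContDiff ℝ (⊤ : ℕ∞) ρ ∧
    (∀ z ∈ closure Ω, ∃ hh : (complexHessian ρ z).IsHermitian, hh.eigenvalues ∈ Γ) ∧
    (∀ z ∈ frontier Ω, ρ z = 0) ∧ (∀ z ∈ Ω, ρ z < 0) ∧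
    ∀ z ∈ frontier Ω, fderiv ℝ ρ z ≠ 0

end

/-!
The penalized translates `w_s(t, z) = u(t + s, z) - k|s|` are subsolutions of the equation with
`G(t + s, z, r + k|s|)` in place of `G`, because translating in time and subtracting a constant
changes neither `∂ₜ` nor the complex Hessian of a test function. By upper semicontinuity and
compactness of `[-A/k, A/k]`, the supremum defining `u^k` is attained at each point by some `w_s`,
which stays below `u^k` near that point. Hence every upper test function for `u^k` there is one
for `w_s`, and `G_k(t, z, r) ≤ G(t + s, z, r) ≤ G(t + s, z, r + k|s|)`.
-/

lemma sSup_sub_sInf_image_nonneg {α : Type*} {u : α → ℝ} {S : Set α}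
    (hu : ∃ C, ∀ p ∈ S, |u p| ≤ C) : 0 ≤ sSup (u '' S) - sInf (u '' S) := by
  obtain ⟨C, hC⟩ := hu
  exact sub_nonneg.2 <| Real.sInf_le_sSup (u '' S)
    ⟨-C, forall_mem_image.2 fun p hp => (abs_le.1 (hC p hp)).1⟩
    ⟨C, forall_mem_image.2 fun p hp => (abs_le.1 (hC p hp)).2⟩

lemma continuousOn_time_slice {E Z : Type*} [TopologicalSpace E] [TopologicalSpace Z]
    {G : ℝ → E → ℝ → Z} {I : Set ℝ} {S : Set E}
    (hG : ContinuousOn (fun p : ℝ × E × ℝ => G p.1 p.2.1 p.2.2) (I ×ˢ S ×ˢ univ))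
    {D : Set (ℝ × E)} (hD : D ⊆ I ×ˢ S) (z : E) (r : ℝ) :
    ContinuousOn (fun t => G t z r) {t | (t, z) ∈ D} :=
  hG.comp (f := fun t => (t, z, r)) (by fun_prop)
    fun _ ht => ⟨(hD ht).1, (hD ht).2, mem_univ r⟩

section SupOverCompact

variable {X Y β : Type*} [TopologicalSpace X] [TopologicalSpace Y]
  {h : X → Y → β} {K : Set Y} {x : X}

lemma upperSemicontinuousOn_of_upperSemicontinuousAt_uncurry [Preorder β]
    (hh : ∀ y ∈ K, UpperSemicontinuousAt (Function.uncurry h) (x, y)) :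
    UpperSemicontinuousOn (h x) K := fun y hy =>
  ((hh y hy).comp (g := fun y => (x, y)) (by fun_prop)).upperSemicontinuousWithinAt K

lemma eventually_forall_lt_of_upperSemicontinuousAt [Preorder β] (hK : IsCompact K)
    (hh : ∀ y ∈ K, UpperSemicontinuousAt (Function.uncurry h) (x, y)) {c : β}
    (hc : ∀ y ∈ K, h x y < c) : ∀ᶠ x' in 𝓝 x, ∀ y ∈ K, h x' y < c :=
  hK.eventually_forall_of_forall_eventually fun y hy => hh y hy c (hc y hy)

lemma eventually_bddAbove_image_of_upperSemicontinuousAt [LinearOrder β] [Nonempty β]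
    [NoMaxOrder β] (hK : IsCompact K)
    (hh : ∀ y ∈ K, UpperSemicontinuousAt (Function.uncurry h) (x, y)) :
    ∀ᶠ x' in 𝓝 x, BddAbove (h x' '' K) := by
  obtain ⟨b, hb⟩ :=
    (upperSemicontinuousOn_of_upperSemicontinuousAt_uncurry hh).bddAbove_of_isCompact hK
  obtain ⟨c, hbc⟩ := exists_gt b
  filter_upwards [eventually_forall_lt_of_upperSemicontinuousAt hK hh fun y hy =>
    (hb (mem_image_of_mem _ hy)).trans_lt hbc] with x' hx'
  exact ⟨c, forall_mem_image.2 fun y hy => (hx' y hy).le⟩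

lemma upperSemicontinuousAt_sSup_image [ConditionallyCompleteLinearOrder β] [DenselyOrdered β]
    (hK : IsCompact K) (hne : K.Nonempty)
    (hh : ∀ y ∈ K, UpperSemicontinuousAt (Function.uncurry h) (x, y)) :
    UpperSemicontinuousAt (fun x' => sSup (h x' '' K)) x := by
  intro c hc
  obtain ⟨d, hd, hdc⟩ := exists_between hc
  have : Nonempty β := ⟨d⟩
  have hbdd : BddAbove (h x '' K) :=
    (upperSemicontinuousOn_of_upperSemicontinuousAt_uncurry hh).bddAbove_of_isCompact hK
  filter_upwards [eventually_forall_lt_of_upperSemicontinuousAt hK hh fun y hy =>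
    (le_csSup hbdd (mem_image_of_mem _ hy)).trans_lt hd] with x' hx'
  exact (csSup_le (hne.image _) (forall_mem_image.2 fun y hy => (hx' y hy).le)).trans_lt hdc

lemma exists_eq_sSup_image_of_upperSemicontinuousAt [ConditionallyCompleteLinearOrder β]
    (hK : IsCompact K) (hne : K.Nonempty)
    (hh : ∀ y ∈ K, UpperSemicontinuousAt (Function.uncurry h) (x, y)) :
    ∃ y ∈ K, h x y = sSup (h x '' K) := by
  obtain ⟨y, hy, hmax⟩ :=
    (upperSemicontinuousOn_of_upperSemicontinuousAt_uncurry hh).exists_isMaxOn hne hK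
  have hgreatest : IsGreatest (h x '' K) (h x y) :=
    ⟨mem_image_of_mem _ hy, forall_mem_image.2 fun _ hz => hmax hz⟩
  exact ⟨y, hy, hgreatest.csSup_eq.symm⟩

end SupOverCompact

section SupConvolution

variable {n : ℕ} {u : ℝ × (Fin n → ℂ) → ℝ} {A k : ℝ} {p : ℝ × (Fin n → ℂ)}

/-- The penalized time translate `(t, z) ↦ u(t + s, z) - k|s|`; the sup-convolution `u^k` is the
supremum of these over `|s| ≤ A/k`. -/
def penalizedTranslate (u : ℝ × (Fin n → ℂ) → ℝ) (k : ℝ) (p : ℝ × (Fin n → ℂ)) (s : ℝ) : ℝ :=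
  u (p.1 + s, p.2) - k * |s|

/-- The points all of whose time translates by at most `a` stay in `D`; the part of `D` on which
the sup-convolution with shifts in `[-a, a]` is controlled by the values of `u` on `D`. -/
def timeErosion (D : Set (ℝ × (Fin n → ℂ))) (a : ℝ) : Set (ℝ × (Fin n → ℂ)) :=
  {p | ∀ s ∈ Icc (-a) a, (p.1 + s, p.2) ∈ D}

lemma Ioo_prod_subset_timeErosion {b c a : ℝ} {Ω : Set (Fin n → ℂ)} :
    Ioo (b + a) (c - a) ×ˢ Ω ⊆ timeErosion (Ioo b c ×ˢ Ω) a := fun _ hp _ hs =>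
  ⟨⟨by linarith [hp.1.1, hs.1], by linarith [hp.1.2, hs.2]⟩, hp.2⟩

lemma timeErosion_subset {D : Set (ℝ × (Fin n → ℂ))} {a : ℝ} (ha : 0 ≤ a) :
    timeErosion D a ⊆ D := fun p hp => by
  simpa only [add_zero] using hp 0 ⟨neg_nonpos.2 ha, ha⟩

lemma upperSemicontinuousAt_penalizedTranslate {s : ℝ}
    (hu : UpperSemicontinuousAt u (p.1 + s, p.2)) :
    UpperSemicontinuousAt (Function.uncurry (penalizedTranslate u k)) (p, s) := by
  have htranslate : UpperSemicontinuousAt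
      (fun y : (ℝ × (Fin n → ℂ)) × ℝ => u (y.1.1 + y.2, y.1.2)) (p, s) :=
    hu.comp (g := fun y : (ℝ × (Fin n → ℂ)) × ℝ => (y.1.1 + y.2, y.1.2)) (by fun_prop)
  have hpenalty : ContinuousAt (fun y : (ℝ × (Fin n → ℂ)) × ℝ => -(k * |y.2|)) (p, s) := by
    fun_prop
  exact htranslate.add hpenalty.upperSemicontinuousAt

lemma upperSemicontinuousAt_supConv (hA : 0 ≤ A / k)
    (hu : ∀ s ∈ Icc (-(A / k)) (A / k), UpperSemicontinuousAt u (p.1 + s, p.2)) :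
    UpperSemicontinuousAt (supConv u A k) p :=
  upperSemicontinuousAt_sSup_image isCompact_Icc (nonempty_Icc.2 (neg_le_self hA))
    fun s hs => upperSemicontinuousAt_penalizedTranslate (hu s hs)

lemma exists_penalizedTranslate_touching_supConv (hA : 0 ≤ A / k)
    (hu : ∀ s ∈ Icc (-(A / k)) (A / k), UpperSemicontinuousAt u (p.1 + s, p.2)) :
    ∃ s ∈ Icc (-(A / k)) (A / k), penalizedTranslate u k p s = supConv u A k p ∧
      ∀ᶠ y in 𝓝 p, penalizedTranslate u k y s ≤ supConv u A k y := by
  have husc : ∀ s ∈ Icc (-(A / k)) (A / k),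
      UpperSemicontinuousAt (Function.uncurry (penalizedTranslate u k)) (p, s) :=
    fun s hs => upperSemicontinuousAt_penalizedTranslate (hu s hs)
  obtain ⟨s, hs, hmax⟩ := exists_eq_sSup_image_of_upperSemicontinuousAt isCompact_Icc
    (nonempty_Icc.2 (neg_le_self hA)) husc
  refine ⟨s, hs, hmax, ?_⟩
  filter_upwards [eventually_bddAbove_image_of_upperSemicontinuousAt isCompact_Icc husc] with y hy
  exact le_csSup hy (mem_image_of_mem _ hs)

end SupConvolution

section ViscositySubsolutions

variable {n : ℕ} {f : (Fin n → ℝ) → ℝ} {Γ : Set (Fin n → ℝ)}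
  {G : ℝ → (Fin n → ℂ) → ℝ → ℝ} {g : (Fin n → ℂ) → ℝ}
  {D : Set (ℝ × (Fin n → ℂ))} {u q : ℝ × (Fin n → ℂ) → ℝ} {p : ℝ × (Fin n → ℂ)}

lemma complexHessian_add_const (w : (Fin n → ℂ) → ℝ) (c : ℝ) :
    complexHessian (fun z => w z + c) = complexHessian w := by
  have hfderiv : fderiv ℝ (fun z => w z + c) = fderiv ℝ w := funext fun _ => fderiv_add_const c
  ext z
  simp only [complexHessian, iteratedFDeriv_two_apply, hfderiv]

lemma IsUpperTestAt.of_eventually_le {v w : ℝ × (Fin n → ℂ) → ℝ} (hq : IsUpperTestAt v q p)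
    (hle : ∀ᶠ y in 𝓝 p, w y ≤ v y) (heq : w p = v p) : IsUpperTestAt w q p :=
  ⟨hq.1.trans heq.symm, (hle.and hq.2.1).mono fun _ hy => hy.1.trans hy.2, hq.2.2⟩

lemma IsUpperTestAt.of_translate {s c : ℝ}
    (hq : IsUpperTestAt (fun y => u (y.1 + s, y.2) - c) q p) :
    IsUpperTestAt u (fun y => q (y.1 - s, y.2) + c) (p.1 + s, p.2) := by
  obtain ⟨heq, hle, hsmooth⟩ := hq
  have hshift : Tendsto (fun y : ℝ × (Fin n → ℂ) => (y.1 - s, y.2)) (𝓝 (p.1 + s, p.2)) (𝓝 p) :=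
    Continuous.tendsto' (by fun_prop) _ _ (by simp)
  refine ⟨by simp [heq], ?_, ?_⟩
  · filter_upwards [hshift.eventually hle] with y hy
    simpa using hy
  · filter_upwards [hshift.eventually hsmooth] with y ⟨htime, hspace⟩
    exact ⟨(differentiableAt_comp_sub_const.2 htime).add_const c, hspace.add contDiffAt_const⟩

lemma ParSubsolOn.upperSemicontinuousAt (hsub : ParSubsolOn f Γ G g D u) (hD : IsOpen D)
    (hp : p ∈ D) : UpperSemicontinuousAt u p := fun c hc =>
  hD.nhdsWithin_eq hp ▸ hsub.1 p hp c hc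

lemma ParSubsolOn.mono_set {D' : Set (ℝ × (Fin n → ℂ))} (hsub : ParSubsolOn f Γ G g D u)
    (hD' : D' ⊆ D) : ParSubsolOn f Γ G g D' u :=
  ⟨hsub.1.mono hD', fun p hp => hsub.2 p (hD' hp)⟩

lemma ParSubsolOn.translate (hsub : ParSubsolOn f Γ G g D u) (s c : ℝ) :
    ParSubsolOn f Γ (fun t z r => G (t + s) z (r + c)) g ((fun p => (p.1 + s, p.2)) ⁻¹' D)
      (fun p => u (p.1 + s, p.2) - c) := by
  constructor
  · have htranslate : UpperSemicontinuousOn (fun p : ℝ × (Fin n → ℂ) => u (p.1 + s, p.2))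
        ((fun p => (p.1 + s, p.2)) ⁻¹' D) :=
      hsub.1.comp (g := fun p : ℝ × (Fin n → ℂ) => (p.1 + s, p.2)) (by fun_prop) fun _ hp => hp
    simpa only [sub_eq_add_neg] using htranslate.add (upperSemicontinuousOn_const (z := -c))
  · intro p hp q hq
    have hderiv : deriv (fun t => q (t - s, p.2) + c) (p.1 + s) =
        deriv (fun t => q (t, p.2)) p.1 := by
      rw [deriv_add_const, deriv_comp_sub_const (f := fun t => q (t, p.2)), add_sub_cancel_right]
    simpa only [hderiv, complexHessian_add_const, add_sub_cancel_right]
      using hsub.2 _ hp _ hq.of_translate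

lemma ParSubsolOn.of_touching_below {v : ℝ × (Fin n → ℂ) → ℝ} (hv : UpperSemicontinuousOn v D)
    (hg : ∀ p ∈ D, 0 ≤ g p.2)
    (htouch : ∀ p ∈ D, ∃ G' D' w, ParSubsolOn f Γ G' g D' w ∧ p ∈ D' ∧ w p = v p ∧
      (∀ᶠ y in 𝓝 p, w y ≤ v y) ∧ G p.1 p.2 (v p) ≤ G' p.1 p.2 (v p)) :
    ParSubsolOn f Γ G g D v := by
  refine ⟨hv, fun p hp q hq => ?_⟩
  obtain ⟨G', D', w, hw, hpD', heq, hle, hG⟩ := htouch p hp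
  refine le_trans (EReal.coe_le_coe_iff.2 ?_) (hw.2 p hpD' q (hq.of_eventually_le hle heq))
  have hgp := hg p hp
  rw [hq.1]
  gcongr

end ViscositySubsolutions

theorem stmt9_general {n : ℕ} {Γ : Set (Fin n → ℝ)} {f : (Fin n → ℝ) → ℝ}
    {D : Set (ℝ × (Fin n → ℂ))} (hD : IsOpen D) {G : ℝ → (Fin n → ℂ) → ℝ → ℝ}
    (hGc : ∀ z r, LowerSemicontinuousOn (fun t => G t z r) {t | (t, z) ∈ D})
    (hGm : ∀ p ∈ D, Monotone (G p.1 p.2)) {g : (Fin n → ℂ) → ℝ} (hg : ∀ p ∈ D, 0 ≤ g p.2)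
    {u : ℝ × (Fin n → ℂ) → ℝ} (hsub : ParSubsolOn f Γ G g D u)
    {A k : ℝ} (hA : 0 ≤ A) (hk : 0 < k) :
    ParSubsolOn f Γ (fun t z r => sInf ((fun s => G (t + s) z r) '' Icc (-(A / k)) (A / k))) g
      (timeErosion D (A / k)) (supConv u A k) := by
  have ha : 0 ≤ A / k := by positivity
  have hu : ∀ p ∈ timeErosion D (A / k), ∀ s ∈ Icc (-(A / k)) (A / k),
      UpperSemicontinuousAt u (p.1 + s, p.2) :=
    fun p hp s hs => hsub.upperSemicontinuousAt hD (hp s hs)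
  refine .of_touching_below
    (fun p hp => (upperSemicontinuousAt_supConv ha (hu p hp)).upperSemicontinuousWithinAt _)
    (fun p hp => hg _ (timeErosion_subset ha hp)) fun p hp => ?_
  obtain ⟨s, hs, heq, hle⟩ := exists_penalizedTranslate_touching_supConv ha (hu p hp)
  refine ⟨_, _, _, hsub.translate s (k * |s|), hp s hs, heq, hle, ?_⟩
  have hbdd : BddBelow ((fun s => G (p.1 + s) p.2 (supConv u A k p)) '' Icc (-(A / k)) (A / k)) :=
    ((hGc p.2 _).comp (by fun_prop) hp).bddBelow_of_isCompact isCompact_Icc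
  calc sInf ((fun s => G (p.1 + s) p.2 (supConv u A k p)) '' Icc (-(A / k)) (A / k))
      ≤ G (p.1 + s) p.2 (supConv u A k p) := csInf_le hbdd (mem_image_of_mem _ hs)
    _ ≤ G (p.1 + s) p.2 (supConv u A k p + k * |s|) :=
      hGm _ (hp s hs) (le_add_of_nonneg_right (by positivity))

/-- for k large, the sup-convolution u^k is a subsolution with G replaced by G_k. -/
theorem stmt9
    {n : ℕ} (hn : 1 ≤ n) (Γ : Set (Fin n → ℝ)) (f : (Fin n → ℝ) → ℝ)
    (hΓ : IsGammaCone n Γ) (hf : IsHessianDensity n Γ f)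
    (Ω : Set (Fin n → ℂ)) (hΩo : IsOpen Ω) (hΩb : Bornology.IsBounded Ω)
    (hΩc : IsConnected Ω) (T : ℝ) (hT : 0 < T)
    (G : ℝ → (Fin n → ℂ) → ℝ → ℝ)
    (hGc : ContinuousOn (fun p : ℝ × (Fin n → ℂ) × ℝ => G p.1 p.2.1 p.2.2)
      (Set.Icc 0 T ×ˢ closure Ω ×ˢ Set.univ))
    (hGm : ∀ t z, Monotone (fun r => G t z r))
    (g : (Fin n → ℂ) → ℝ) (hgc : ContinuousOn g Ω)
    (hg0 : ∀ z ∈ Ω, 0 ≤ g z) (hgb : ∃ C, ∀ z ∈ Ω, g z ≤ C)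
    (u : ℝ × (Fin n → ℂ) → ℝ)
    (hbd : ∃ C, ∀ p ∈ Set.Ioo 0 T ×ˢ Ω, |u p| ≤ C)
    (hsub : ParSubsolOn f Γ G g (Set.Ioo 0 T ×ˢ Ω) u)
    (A : ℝ)
    (hA : sSup (u '' (Set.Ioo 0 T ×ˢ Ω)) - sInf (u '' (Set.Ioo 0 T ×ˢ Ω)) < A) :
    ∃ k₀ : ℝ, ∀ k : ℝ, k₀ ≤ k →
      ParSubsolOn f Γ
        (fun t z r => sInf ((fun s : ℝ => G (t + s) z r) '' Set.Icc (-(A / k)) (A / k))) g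
        (Set.Ioo (A / k) (T - A / k) ×ˢ Ω) (supConv u A k) := by
  have hA0 : 0 ≤ A := (sSup_sub_sInf_image_nonneg hbd).trans hA.le
  have hGt (z : Fin n → ℂ) (r : ℝ) :=
    (continuousOn_time_slice hGc (prod_mono Ioo_subset_Icc_self subset_closure)
      z r).lowerSemicontinuousOn
  refine ⟨1, fun k hk => (stmt9_general (isOpen_Ioo.prod hΩo) hGt (fun p _ => hGm p.1 p.2)
    (fun p hp => hg0 _ hp.2) hsub hA0 (one_pos.trans_le hk)).mono_set ?_⟩
  simpa only [zero_add] using Ioo_prod_subset_timeErosion (b := 0)
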